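/- Let M be a positive integer, g, ĝ ∈ ℝ^M, and T, T̂ be M×M real matrices with ‖T‖∞ < 1 and ‖T̂‖∞ < 1. Let x be the unique solution of x = g + T·x and x̂ the unique solution of x̂ = ĝ + T̂·x̂, and assume ‖x̂‖∞ ≤ 1. If ε_T ≥ 0 and ε_g ≥ 0 are such that |T̂_{s,s'} − T_{s,s'}| ≤ ε_T for all s, s' and |ĝ_s − g_s| ≤ ε_g for all s, then ‖x̂ − x‖∞ ≤ (M·ε_T + ε_g)/(1 − ‖T‖∞). -/

import Mathlib

/-- The vector sup norm `‖x‖∞ = max_s |x_s|`. -/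
noncomputable def vecNormInf {M : ℕ} (x : Fin M → ℝ) : ℝ := ⨆ s, |x s|

/-- The matrix operator norm induced by the vector sup norm,
i.e. the maximum absolute row sum `max_s ∑_{s'} |T_{s,s'}|`. -/
noncomputable def matNormInf {M : ℕ} (T : Matrix (Fin M) (Fin M) ℝ) : ℝ :=
  ⨆ s, ∑ s', |T s s'|

/-!
The true values `x` are the fixed point of the contraction `f y = g + T y`, so the distance from
any `y` to `x` is at most the residual `‖y - f y‖` divided by `1 - ‖T‖`. Since `x̂` solves the
estimated equation, its residual is the model error `(ĝ - g) + (T̂ - T) x̂`; the row sums of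
`T̂ - T` are at most `M ε_T`, and `‖x̂‖ ≤ 1`.
-/

open Function
open scoped Matrix NNReal Matrix.Norms.Operator

theorem dist_le_of_contractingWith_of_isFixedPt {X : Type*} [MetricSpace X] {K : ℝ≥0}
    {f f' : X → X} {x y : X} (hf : ContractingWith K f) (hx : IsFixedPt f x)
    (hy : IsFixedPt f' y) : dist y x ≤ dist (f' y) (f y) / (1 - K) := by
  simpa only [hy.eq] using hf.dist_le_of_fixedPoint y hx

section Matrix

variable {m n : Type*} [Fintype m] [Fintype n]

theorem linfty_opNorm_le_card_mul {E : Type*} [SeminormedAddCommGroup E] {A : Matrix m n E}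
    {ε : ℝ} (hε : 0 ≤ ε) (hA : ∀ i j, ‖A i j‖ ≤ ε) : ‖A‖ ≤ Fintype.card n * ε := by
  lift ε to ℝ≥0 using hε
  have row_sum_le (i : m) : ∑ j, ‖A i j‖₊ ≤ Fintype.card n * ε := by
    simpa using Finset.sum_le_card_nsmul Finset.univ (fun j => ‖A i j‖₊) ε fun j _ => hA i j
  rw [Matrix.linfty_opNorm_def]
  exact_mod_cast Finset.sup_le fun i _ => row_sum_le i

variable {R : Type*} [NonUnitalNormedRing R] {g g' x x' : n → R} {T T' : Matrix n n R}

theorem contractingWith_add_mulVec (g : n → R) (hT : ‖T‖ < 1) :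
    ContractingWith ‖T‖₊ fun y => g + T *ᵥ y := by
  refine ⟨hT, LipschitzWith.of_dist_le_mul fun y z => ?_⟩
  rw [dist_add_left, dist_eq_norm, dist_eq_norm, ← Matrix.mulVec_sub]
  exact Matrix.linfty_opNorm_mulVec T (y - z)

theorem norm_sub_le_of_eq_add_mulVec (hT : ‖T‖ < 1) (hx : x = g + T *ᵥ x)
    (hx' : x' = g' + T' *ᵥ x') :
    ‖x' - x‖ ≤ (‖T' - T‖ * ‖x'‖ + ‖g' - g‖) / (1 - ‖T‖) := by
  have residual_le : ‖(g' + T' *ᵥ x') - (g + T *ᵥ x')‖ ≤ ‖T' - T‖ * ‖x'‖ + ‖g' - g‖ := by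
    rw [add_sub_add_comm, ← Matrix.sub_mulVec, add_comm]
    exact norm_add_le_of_le (Matrix.linfty_opNorm_mulVec _ _) le_rfl
  calc ‖x' - x‖
      ≤ ‖(g' + T' *ᵥ x') - (g + T *ᵥ x')‖ / (1 - ‖T‖) := by
        simpa only [dist_eq_norm, coe_nnnorm] using
          dist_le_of_contractingWith_of_isFixedPt (f' := fun y => g' + T' *ᵥ y)
            (contractingWith_add_mulVec g hT) hx.symm hx'.symm
    _ ≤ (‖T' - T‖ * ‖x'‖ + ‖g' - g‖) / (1 - ‖T‖) :=
        div_le_div_of_nonneg_right residual_le (sub_pos.2 hT).le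

theorem stmt_7_general {εT εg ρ : ℝ} (hT : ‖T‖ < 1) (hx : x = g + T *ᵥ x)
    (hx' : x' = g' + T' *ᵥ x') (hρ : ‖x'‖ ≤ ρ) (hεT : 0 ≤ εT) (hεg : 0 ≤ εg)
    (hTent : ∀ s s', ‖T' s s' - T s s'‖ ≤ εT) (hgent : ∀ s, ‖g' s - g s‖ ≤ εg) :
    ‖x' - x‖ ≤ (Fintype.card n * εT * ρ + εg) / (1 - ‖T‖) := by
  have matrix_error : ‖T' - T‖ ≤ Fintype.card n * εT := linfty_opNorm_le_card_mul hεT hTent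
  have vector_error : ‖g' - g‖ ≤ εg := (pi_norm_le_iff_of_nonneg hεg).2 hgent
  have : 0 ≤ 1 - ‖T‖ := (sub_pos.2 hT).le
  refine (norm_sub_le_of_eq_add_mulVec hT hx hx').trans ?_
  gcongr

end Matrix

theorem vecNormInf_eq_norm {M : ℕ} (x : Fin M → ℝ) : vecNormInf x = ‖x‖ := by
  rw [Pi.norm_def, Finset.sup_univ_eq_ciSup, NNReal.coe_iSup]
  rfl

theorem matNormInf_eq_norm {M : ℕ} (T : Matrix (Fin M) (Fin M) ℝ) : matNormInf T = ‖T‖ := by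
  rw [Matrix.linfty_opNorm_def, Finset.sup_univ_eq_ciSup, NNReal.coe_iSup]
  simp only [matNormInf, NNReal.coe_sum, coe_nnnorm, Real.norm_eq_abs]

/-- Deterministic error bound for the Expected Threat model: if the entrywise
estimation errors of `T` and `g` are bounded by `ε_T` and `ε_g`, then
`‖x̂ - x‖∞ ≤ (M·ε_T + ε_g)/(1 - ‖T‖∞)`. -/
theorem stmt_7 (M : ℕ) (hM : 0 < M) (g ghat : Fin M → ℝ)
    (T That : Matrix (Fin M) (Fin M) ℝ)
    (hT : matNormInf T < 1) (hThat : matNormInf That < 1)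
    (x xhat : Fin M → ℝ)
    (hx : x = g + T.mulVec x) (hxhat : xhat = ghat + That.mulVec xhat)
    (hxhat1 : vecNormInf xhat ≤ 1)
    (εT εg : ℝ) (hεT : 0 ≤ εT) (hεg : 0 ≤ εg)
    (hTent : ∀ s s', |That s s' - T s s'| ≤ εT)
    (hgent : ∀ s, |ghat s - g s| ≤ εg) :
    vecNormInf (xhat - x) ≤ (M * εT + εg) / (1 - matNormInf T) := by
  simp only [vecNormInf_eq_norm, matNormInf_eq_norm] at hT hxhat1 ⊢
  simpa using stmt_7_general hT hx hxhat hxhat1 hεT hεg hTent hgent
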